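/- arXiv:math/0004056 — 4 statements merged into one kernel-verified Lean document; each statement's English description precedes it below -/
import Mathlib

section
/- Let n = p + q be odd with p − q ≡ 1 (mod 4) (i.e. p − q ≡ 1 or 5 mod 8, the case in which the volume element satisfies ω² = +1). Then Cl_{p,q} decomposes into a direct sum of two isomorphic subalgebras: if p ≥ 1 there is an ℝ-algebra isomorphism Cl_{p,q} ≅ Cl_{p−1,q} × Cl_{p−1,q}, and if q ≥ 1 there is an ℝ-algebra isomorphism Cl_{p,q} ≅ Cl_{p,q−1} × Cl_{p,q−1}. -/
open CliffordAlgebra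
open scoped TensorProduct

/-- The standard quadratic form of signature `(p,q)` on `ℝ^{p+q}`:
`Q(x) = x₁² + ⋯ + x_p² − x_{p+1}² − ⋯ − x_{p+q}²`. -/
noncomputable def Qpq (p q : ℕ) : QuadraticForm ℝ (Fin (p+q) → ℝ) :=
  QuadraticMap.weightedSumSquares ℝ (fun i : Fin (p+q) => if (i : ℕ) < p then (1 : ℝ) else -1)

/-- The real Clifford algebra `Cl_{p,q}`. -/
abbrev Cl (p q : ℕ) : Type := CliffordAlgebra (Qpq p q)

/-- The generators `e₁, …, e_{p+q}` of `Cl_{p,q}` (here `0`-indexed). -/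
noncomputable def e (p q : ℕ) (i : Fin (p+q)) : Cl p q :=
  CliffordAlgebra.ι (Qpq p q) (Pi.single i 1)


section AntiComm
variable {A : Type*} [Ring A]

theorem ac_one : ∀ (n : ℕ) (g : Fin n → A) (x : A) (_ : ∀ i, x * g i = - (g i * x)),
    x * (List.ofFn g).prod = (-1) ^ n * ((List.ofFn g).prod * x)
  | 0, g, x, _ => by simp
  | n + 1, g, x, h => by
    have ih := ac_one n (fun i => g i.succ) x (fun i => h _)
    have hc : g 0 * (-1) ^ n = (-1) ^ n * g 0 := ((Commute.neg_one_right (g 0)).pow_right n).eq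
    rw [List.ofFn_succ, List.prod_cons, ← mul_assoc, h 0, neg_mul, mul_assoc, ih,
      ← mul_assoc (g 0), hc, pow_succ]
    noncomm_ring

theorem ac_two : ∀ (n : ℕ) (g : Fin n → A) (_ : ∀ i j, i ≠ j → g i * g j = - (g j * g i))
    (i : Fin n), g i * (List.ofFn g).prod = (-1) ^ (n + 1) * ((List.ofFn g).prod * g i)
  | 0, g, _, i => i.elim0
  | n + 1, g, h, i => by
    have hc : ∀ m, g 0 * (-1) ^ m = (-1) ^ m * g 0 :=
      fun m => ((Commute.neg_one_right (g 0)).pow_right m).eq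
    rw [List.ofFn_succ, List.prod_cons]
    refine Fin.cases ?_ (fun i => ?_) i
    · have h1 := ac_one n (fun i => g i.succ) (g 0)
        (fun i => h _ _ (Fin.succ_ne_zero i).symm)
      conv_lhs => rw [h1, ← mul_assoc (g 0), hc]
      rw [pow_succ, pow_succ]
      noncomm_ring
    · have ih := ac_two n (fun i => g i.succ)
        (fun i j hij => h _ _ (fun hh => hij (Fin.succ_injective _ hh))) i
      rw [← mul_assoc, h _ _ (Fin.succ_ne_zero i), neg_mul, mul_assoc, ih,
        ← mul_assoc (g 0), hc, pow_succ _ (n + 1)]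
      noncomm_ring

theorem ac_three [Algebra ℝ A] : ∀ (n : ℕ) (g : Fin n → A) (w : Fin n → ℝ)
    (_ : ∀ i j, i ≠ j → g i * g j = - (g j * g i))
    (_ : ∀ i, g i * g i = algebraMap ℝ A (w i)),
    (List.ofFn g).prod * (List.ofFn g).prod =
      algebraMap ℝ A ((-1) ^ (n * (n - 1) / 2) * ∏ i, w i)
  | 0, g, w, _, _ => by simp
  | n + 1, g, w, h, hw => by
    have ih := ac_three n (fun i => g i.succ) (fun i => w i.succ)
      (fun i j hij => h _ _ (fun hh => hij (Fin.succ_injective _ hh))) (fun i => hw _)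
    have h1 := ac_one n (fun i => g i.succ) (g 0)
        (fun i => h _ _ (Fin.succ_ne_zero i).symm)
    have hn : (n + 1) * (n + 1 - 1) / 2 = n * (n - 1) / 2 + n := by
      have := Finset.sum_range_id (n + 1)
      rw [Finset.sum_range_succ, Finset.sum_range_id] at this
      exact this.symm
    rw [List.ofFn_succ, List.prod_cons, hn, Fin.prod_univ_succ]
    set P := (List.ofFn fun i => g i.succ).prod
    have hs : P * g 0 = (-1) ^ n * (g 0 * P) := by
      rw [h1, ← mul_assoc, ← (Commute.refl (-1 : A)).mul_pow]; simp
    have hc : ∀ x : A, ∀ m, x * (-1) ^ m = (-1) ^ m * x :=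
      fun x m => ((Commute.neg_one_right x).pow_right m).eq
    calc g 0 * P * (g 0 * P) = g 0 * (P * g 0) * P := by simp only [mul_assoc]
      _ = (-1) ^ n * ((g 0 * g 0) * (P * P)) := by
        rw [hs, ← mul_assoc, hc]; simp only [mul_assoc]
      _ = _ := by
        rw [hw, ih, pow_add]
        have : ((-1 : A)) ^ n = algebraMap ℝ A ((-1) ^ n) := by simp
        rw [this, ← map_mul, ← map_mul]
        congr 1; ring

end AntiComm

section Main
variable {M : Type*} [AddCommGroup M] [Module ℝ M] (Q : QuadraticForm ℝ M)

/-- The form on `M × ℝ` obtained by adding one generator with square `c`. -/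
noncomputable def Qext (c : ℝ) : QuadraticForm ℝ (M × ℝ) :=
  Q.prod (c • (QuadraticMap.sq : QuadraticForm ℝ ℝ))

theorem Qext_apply (c : ℝ) (v : M × ℝ) : Qext Q c v = Q v.1 + c * (v.2 * v.2) := by
  simp [Qext]

/-- Inclusion of the smaller Clifford algebra. -/
noncomputable def inclExt (c : ℝ) : CliffordAlgebra Q →ₐ[ℝ] CliffordAlgebra (Qext Q c) :=
  CliffordAlgebra.lift Q ⟨ι (Qext Q c) ∘ₗ LinearMap.inl ℝ M ℝ, fun m => by
    simp [ι_sq_scalar, Qext_apply]⟩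

theorem inclExt_ι (c : ℝ) (m : M) : inclExt Q c (ι Q m) = ι (Qext Q c) (m, 0) := by
  simp [inclExt]

theorem ext_split (c : ℝ) (v : M × ℝ) :
    ι (Qext Q c) v = inclExt Q c (ι Q v.1) + v.2 • ι (Qext Q c) (0, 1) := by
  rw [inclExt_ι, ← map_smul, ← map_add]; simp

theorem ext_anti (c : ℝ) (m : M) :
    ι (Qext Q c) (0, 1) * inclExt Q c (ι Q m) =
      - (inclExt Q c (ι Q m) * ι (Qext Q c) (0, 1)) := by
  rw [inclExt_ι, eq_neg_iff_add_eq_zero, ι_mul_ι_add_swap]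
  simp [QuadraticMap.polar, Qext_apply]

theorem ext_sq (c : ℝ) :
    ι (Qext Q c) (0, 1) * ι (Qext Q c) (0, 1) = algebraMap ℝ _ c := by
  simp [ι_sq_scalar, Qext_apply]

theorem main_ext (c : ℝ) (hc : c * c = 1) (η : CliffordAlgebra Q)
    (hanti : ∀ m, ι Q m * η = - (η * ι Q m)) (hsq : η * η = algebraMap ℝ _ c)
    (hcomm : ι (Qext Q c) (0, 1) * inclExt Q c η = inclExt Q c η * ι (Qext Q c) (0, 1)) :
    Nonempty (CliffordAlgebra (Qext Q c) ≃ₐ[ℝ] (CliffordAlgebra Q × CliffordAlgebra Q)) := by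
  -- one component of the forward map
  have key : ∀ s : ℝ, s * s = 1 → ∃ φ : CliffordAlgebra (Qext Q c) →ₐ[ℝ] CliffordAlgebra Q,
      ∀ v, φ (ι _ v) = ι Q v.1 + (s * v.2) • η := by
    intro s hs
    refine ⟨CliffordAlgebra.lift (Qext Q c)
      ⟨ι Q ∘ₗ LinearMap.fst ℝ M ℝ + (s • LinearMap.snd ℝ M ℝ).smulRight η, fun v => ?_⟩, ?_⟩
    · simp only [LinearMap.add_apply, LinearMap.comp_apply, LinearMap.fst_apply,
        LinearMap.smulRight_apply, LinearMap.smul_apply, LinearMap.snd_apply, smul_eq_mul]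
      have hv : s * v.2 * (s * v.2) * c = c * (v.2 * v.2) := by
        linear_combination (v.2 * v.2 * c) * hs
      rw [Qext_apply, add_mul, mul_add, mul_add, ι_sq_scalar, mul_smul_comm, hanti,
        smul_mul_assoc, smul_mul_smul_comm, hsq, map_add, ← hv, map_mul _ _ c,
        Algebra.smul_def (s * v.2 * (s * v.2))]
      module
    · intro v; simp
  obtain ⟨φ₁, h₁⟩ := key 1 (by norm_num)
  obtain ⟨φ₂, h₂⟩ := key (-1) (by norm_num)
  set E := ι (Qext Q c) (0, 1) with hE
  set j := inclExt Q c with hj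
  have hEE : E * E = algebraMap ℝ _ c := ext_sq Q c
  have hjη : j η * j η = algebraMap ℝ _ c := by rw [← map_mul, hsq]; simp
  set ω := c • (j η * E) with hω
  have hωω : ω * ω = 1 := by
    rw [hω, smul_mul_smul_comm, hc, one_smul, mul_assoc, ← mul_assoc E, hcomm, mul_assoc, hEE,
      ← mul_assoc, hjη, ← map_mul, hc, map_one]
  have hωj : ∀ a, j a * ω = ω * j a := by
    intro a
    induction a using CliffordAlgebra.induction with
    | algebraMap r => simpa using Algebra.commutes r ω
    | ι m =>
      have h3 : j (ι Q m) * j η = - (j η * j (ι Q m)) := by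
        rw [← map_mul, hanti, map_neg, map_mul]
      have h4 : E * j (ι Q m) = - (j (ι Q m) * E) := ext_anti Q c m
      rw [hω, mul_smul_comm, smul_mul_assoc, ← mul_assoc, h3, mul_assoc, h4]
      simp [mul_assoc]
    | mul a b ha hb => rw [map_mul, mul_assoc, hb, ← mul_assoc, ha, mul_assoc]
    | add a b ha hb => rw [map_add, add_mul, mul_add, ha, hb]
  set u : CliffordAlgebra (Qext Q c) := (2⁻¹ : ℝ) • (1 + ω) with hu
  set u' : CliffordAlgebra (Qext Q c) := (2⁻¹ : ℝ) • (1 - ω) with hu'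
  have huu : u * u = u := by
    rw [hu, smul_mul_smul_comm, add_mul, mul_add, mul_add, hωω]
    simp only [one_mul, mul_one]; module
  have hu'u' : u' * u' = u' := by
    rw [hu', smul_mul_smul_comm, sub_mul, mul_sub, mul_sub, hωω]
    simp only [one_mul, mul_one]; module
  have huu' : u * u' = 0 := by
    rw [hu, hu', smul_mul_smul_comm, add_mul, mul_sub, mul_sub, hωω]
    simp only [one_mul, mul_one]; module
  have hu'u : u' * u = 0 := by
    rw [hu, hu', smul_mul_smul_comm, sub_mul, mul_add, mul_add, hωω]
    simp only [one_mul, mul_one]; module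
  have hadd : u + u' = 1 := by rw [hu, hu']; module
  have huj : ∀ a, u * j a = j a * u := fun a => by
    rw [hu, smul_mul_assoc, mul_smul_comm, add_mul, mul_add, hωj]; simp
  have huj' : ∀ a, u' * j a = j a * u' := fun a => by
    rw [hu', smul_mul_assoc, mul_smul_comm, sub_mul, mul_sub, hωj]; simp
  have sw : ∀ (a b x y : CliffordAlgebra (Qext Q c)), x * b = b * x →
      (a * x) * (b * y) = (a * b) * (x * y) := fun a b x y h => by
    rw [mul_assoc, ← mul_assoc x, h]; simp only [mul_assoc]
  let ψ : (CliffordAlgebra Q × CliffordAlgebra Q) →ₐ[ℝ] CliffordAlgebra (Qext Q c) :=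
    AlgHom.ofLinearMap
      ((LinearMap.mulRight ℝ u ∘ₗ j.toLinearMap).coprod (LinearMap.mulRight ℝ u' ∘ₗ j.toLinearMap))
      (by simp [hadd])
      (by
        rintro ⟨a, b⟩ ⟨a', b'⟩
        simp only [LinearMap.coprod_apply, LinearMap.comp_apply, Prod.mk_mul_mk,
          LinearMap.mulRight_apply, AlgHom.toLinearMap_apply]
        rw [add_mul, mul_add, mul_add, sw _ _ _ _ (huj a'), sw _ _ _ _ (huj b'),
          sw _ _ _ _ (huj' a'), sw _ _ _ _ (huj' b'), huu, huu', hu'u, hu'u']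
        simp)
  have hψ : ∀ a b, ψ (a, b) = j a * u + j b * u' := fun a b => by
    simp [ψ]
  have hφj : ∀ a, φ₁ (j a) = a := fun a => by
    have : φ₁.comp j = AlgHom.id ℝ _ := by
      ext m; simp [hj, inclExt_ι, h₁]
    exact DFunLike.congr_fun this a
  have hφj' : ∀ a, φ₂ (j a) = a := fun a => by
    have : φ₂.comp j = AlgHom.id ℝ _ := by
      ext m; simp [hj, inclExt_ι, h₂]
    exact DFunLike.congr_fun this a
  have hφω : φ₁ ω = 1 := by
    rw [hω, map_smul, map_mul, hφj, hE, h₁]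
    simp [hsq, Algebra.smul_def, ← map_mul, hc]
  have hφω' : φ₂ ω = -1 := by
    rw [hω, map_smul, map_mul, hφj', hE, h₂]
    simp [hsq, Algebra.smul_def, ← map_mul, hc]
  refine ⟨AlgEquiv.ofAlgHom (φ₁.prod φ₂) ψ ?_ ?_⟩
  · apply AlgHom.ext
    rintro ⟨a, b⟩
    have e1 : φ₁ u = 1 := by rw [hu, map_smul, map_add, hφω, map_one]; module
    have e2 : φ₁ u' = 0 := by rw [hu', map_smul, map_sub, hφω, map_one]; module
    have e3 : φ₂ u = 0 := by rw [hu, map_smul, map_add, hφω', map_one]; module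
    have e4 : φ₂ u' = 1 := by rw [hu', map_smul, map_sub, hφω', map_one]; module
    simp [hψ, hφj, hφj', e1, e2, e3, e4]
  · apply CliffordAlgebra.hom_ext
    apply LinearMap.ext
    intro v
    have hηω : j η * ω = E := by
      rw [hω, mul_smul_comm, ← mul_assoc, hjη, ← Algebra.smul_def, smul_smul, hc, one_smul]
    simp only [LinearMap.comp_apply, AlgHom.toLinearMap_apply, AlgHom.comp_apply,
      AlgHom.prod_apply, hψ, h₁, h₂, AlgHom.id_apply]
    rw [ext_split Q c v, ← hE, ← hηω, ← hj, map_add, map_add, map_smul, map_smul, hu, hu']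
    simp only [add_mul, mul_smul_comm, smul_mul_assoc, mul_add, mul_sub, mul_one]
    module

end Main

theorem iso_ext {N n : ℕ} (h : N = n + 1) (j : Fin (n + 1)) (w : Fin N → ℝ) (w' : Fin n → ℝ)
    (hw : ∀ i, w' i = w (Fin.cast h.symm (j.succAbove i))) :
    Nonempty ((QuadraticMap.weightedSumSquares ℝ w).IsometryEquiv
      (Qext (QuadraticMap.weightedSumSquares ℝ w') (w (Fin.cast h.symm j)))) := by
  subst h
  refine ⟨⟨{ toFun := fun v => (fun i => v (j.succAbove i), v j)
             invFun := fun v => j.insertNth v.2 v.1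
             map_add' := fun _ _ => rfl
             map_smul' := fun _ _ => rfl
             left_inv := fun v => ?_
             right_inv := fun v => ?_ }, fun v => ?_⟩⟩
  · exact Fin.insertNth_self_removeNth j v
  · ext <;> simp
  · simp only [Qext_apply, QuadraticMap.weightedSumSquares_apply, hw, smul_eq_mul]
    rw [Fin.sum_univ_succAbove _ j, add_comm]
    rfl

theorem anti_all (p q : ℕ) {A : Type*} [Ring A] [Algebra ℝ A] (f : (Fin (p + q) → ℝ) →ₗ[ℝ] A)
    (η : A) (s : ℝ) (h : ∀ i, f (Pi.single i 1) * η = s • (η * f (Pi.single i 1)))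
    (m : Fin (p + q) → ℝ) : f m * η = s • (η * f m) := by
  have hm : f m = ∑ i, m i • f (Pi.single i 1) := by
    conv_lhs => rw [pi_eq_sum_univ' m]
    simp
  rw [hm, Finset.sum_mul, Finset.mul_sum, Finset.smul_sum]
  refine Finset.sum_congr rfl fun i _ => ?_
  rw [smul_mul_assoc, h, mul_smul_comm, smul_comm]

theorem e_anti (p q : ℕ) (i j : Fin (p + q)) (hij : i ≠ j) :
    e p q i * e p q j = - (e p q j * e p q i) := by
  rw [eq_neg_iff_add_eq_zero, e, e, ι_mul_ι_add_swap]
  have : QuadraticMap.polar (Qpq p q) (Pi.single i 1) (Pi.single j 1) = 0 := by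
    simp only [QuadraticMap.polar, Qpq, QuadraticMap.weightedSumSquares_apply,
      ← Finset.sum_sub_distrib]
    refine Finset.sum_eq_zero fun k _ => ?_
    by_cases h1 : k = i
    · subst h1; simp [hij]
    · simp [Pi.single_apply, h1]
  rw [this, map_zero]

theorem e_sq (p q : ℕ) (i : Fin (p + q)) :
    e p q i * e p q i = algebraMap ℝ _ (if (i : ℕ) < p then (1 : ℝ) else -1) := by
  rw [e, ι_sq_scalar]
  congr 1
  rw [Qpq, QuadraticMap.weightedSumSquares_apply, Finset.sum_eq_single i]
  · simp
  · intro b _ hb; simp [hb]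
  · simp

theorem prod_w (p q : ℕ) :
    ∏ i : Fin (p + q), (if (i : ℕ) < p then (1 : ℝ) else -1) = (-1) ^ q := by
  rw [Fin.prod_univ_add]; simp

theorem even_case (p q m : ℕ) (hm : p + q = 2 * m) :
    Nonempty (CliffordAlgebra (Qext (Qpq p q) ((-1) ^ (m + q))) ≃ₐ[ℝ] (Cl p q × Cl p q)) := by
  have hsg : ((-1 : ℝ)) ^ ((p + q) * (p + q - 1) / 2) = (-1) ^ m := by
    rw [hm, mul_assoc, Nat.mul_div_cancel_left _ (by norm_num)]
    rcases Nat.eq_zero_or_pos m with rfl | h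
    · simp
    · rw [mul_comm, pow_mul, Odd.neg_one_pow]
      exact ⟨m - 1, by omega⟩
  refine main_ext _ _ (by rw [← mul_pow]; simp) (List.ofFn (e p q)).prod (fun v => ?_) ?_ ?_
  · have := anti_all p q (ι (Qpq p q)) (List.ofFn (e p q)).prod (-1) (fun i => ?_) v
    · simpa using this
    · have := ac_two _ (e p q) (e_anti p q) i
      rw [Odd.neg_one_pow ⟨m, by omega⟩] at this
      simpa [e] using this
  · rw [ac_three _ (e p q) _ (e_anti p q) (e_sq p q), prod_w, hsg, pow_add]
  · rw [map_list_prod, List.map_ofFn, ac_one _ (_ ∘ e p q) _ (fun i => ext_anti _ _ _),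
      Even.neg_one_pow (n := p + q) ⟨m, by omega⟩, one_mul]

/-- For `n = p + q` odd with `p − q ≡ 1 (mod 4)` (i.e. `p − q ≡ 1, 5 (mod 8)`, the case
`ω² = +1`), the Clifford algebra `Cl_{p,q}` decomposes into a direct sum of two isomorphic
subalgebras: if `p ≥ 1` then `Cl_{p,q} ≅ Cl_{p−1,q} × Cl_{p−1,q}`, and if `q ≥ 1` then
`Cl_{p,q} ≅ Cl_{p,q−1} × Cl_{p,q−1}`, as `ℝ`-algebras. -/
theorem cl_odd_direct_sum_decomposition (p q : ℕ) (hodd : Odd (p + q))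
    (hmod : ((p : ℤ) - q) % 4 = 1) :
    (1 ≤ p → Nonempty (Cl p q ≃ₐ[ℝ] (Cl (p - 1) q × Cl (p - 1) q))) ∧
    (1 ≤ q → Nonempty (Cl p q ≃ₐ[ℝ] (Cl p (q - 1) × Cl p (q - 1)))) := by
  obtain ⟨m, hm⟩ := hodd
  constructor
  · intro hp
    obtain ⟨p, rfl⟩ : ∃ p', p = p' + 1 := ⟨p - 1, by omega⟩
    rw [Nat.add_sub_cancel]
    obtain ⟨E⟩ := even_case p q m (by omega)
    rw [Even.neg_one_pow (by rw [Nat.even_iff]; omega)] at E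
    obtain ⟨I⟩ := iso_ext (N := p + 1 + q) (n := p + q) (by omega) 0
      (fun i => if (i : ℕ) < p + 1 then (1 : ℝ) else -1)
      (fun i => if (i : ℕ) < p then (1 : ℝ) else -1) (fun i => by simp)
    simp only [Fin.val_cast, Fin.val_zero, Nat.succ_pos, if_true] at I
    exact ⟨(CliffordAlgebra.equivOfIsometry I).trans E⟩
  · intro hq
    obtain ⟨q, rfl⟩ : ∃ q', q = q' + 1 := ⟨q - 1, by omega⟩
    rw [Nat.add_sub_cancel]
    obtain ⟨E⟩ := even_case p q m (by omega)
    rw [Odd.neg_one_pow (by rw [Nat.odd_iff]; omega)] at E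
    obtain ⟨I⟩ := iso_ext (N := p + (q + 1)) (n := p + q) (by omega) (Fin.last _)
      (fun i => if (i : ℕ) < p then (1 : ℝ) else -1)
      (fun i => if (i : ℕ) < p then (1 : ℝ) else -1) (fun i => by simp)
    have hl : ¬ (p + q < p) := by omega
    simp only [Fin.val_cast, Fin.val_last, hl, if_false] at I
    exact ⟨(CliffordAlgebra.equivOfIsometry I).trans E⟩
end

section
/- Let n = p + q be odd. Then the complexified Clifford algebra ℂ_n = ℂ ⊗_ℝ Cl_{p,q} decomposes into a direct sum of two subalgebras: for all p', q' ≥ 0 with p' + q' = n − 1 there is a ℂ-algebra isomorphism ℂ ⊗_ℝ Cl_{p,q} ≅ (ℂ ⊗_ℝ Cl_{p',q'}) × (ℂ ⊗_ℝ Cl_{p',q'}). -/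
open CliffordAlgebra
open scoped TensorProduct

/-- Ordered product `x₀ x₁ ⋯ x_{k-1}`. -/
def prodUpTo {A : Type*} [Ring A] (x : ℕ → A) : ℕ → A
  | 0 => 1
  | k + 1 => prodUpTo x k * x k

theorem prodUpTo_anti {A : Type*} [Ring A] (x : ℕ → A) (y : A) (k : ℕ)
    (h : ∀ i < k, y * x i = -(x i * y)) :
    y * prodUpTo x k = (-1) ^ k * (prodUpTo x k * y) := by
  induction k with
  | zero => simp [prodUpTo]
  | succ k ih =>
    have ih := ih (fun i hi => h i (by omega))
    have hk := h k (by omega)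
    rw [prodUpTo, ← mul_assoc, ih, mul_assoc, mul_assoc, hk, pow_succ]
    simp [mul_assoc]

theorem prodUpTo_mem {A : Type*} [Ring A] (x : ℕ → A) (k : ℕ)
    (h : ∀ i < k, ∀ j < k, i ≠ j → x i * x j = -(x j * x i)) (i : ℕ) (hi : i < k) :
    x i * prodUpTo x k = (-1) ^ (k + 1) * (prodUpTo x k * x i) := by
  induction k with
  | zero => omega
  | succ k ih =>
    rcases Nat.lt_succ_iff_lt_or_eq.mp hi with hlt | rfl
    · have ih := ih (fun i hi j hj => h i (by omega) j (by omega)) hlt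
      have hk := h i hi k (by omega) (by omega)
      rw [prodUpTo, ← mul_assoc, ih, mul_assoc, mul_assoc, hk, pow_succ _ (k + 1)]
      simp [mul_assoc]
    · have := prodUpTo_anti x (x i) i (fun j hj => h i (by omega) j (by omega) (by omega))
      rw [prodUpTo, ← mul_assoc, this, pow_succ, pow_succ]
      simp [mul_assoc]

theorem prodUpTo_sq {A : Type*} [Ring A] (x : ℕ → A) (k : ℕ)
    (h : ∀ i < k, ∀ j < k, i ≠ j → x i * x j = -(x j * x i)) (hs : ∀ i < k, x i * x i = 1) :
    prodUpTo x k * prodUpTo x k = 1 ∨ prodUpTo x k * prodUpTo x k = -1 := by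
  induction k with
  | zero => simp [prodUpTo]
  | succ k ih =>
    have ih := ih (fun i hi j hj => h i (by omega) j (by omega)) (fun i hi => hs i (by omega))
    have h1 := prodUpTo_anti x (x k) k (fun j hj => h k (by omega) j (by omega) (by omega))
    have h2 : prodUpTo x (k + 1) * prodUpTo x (k + 1)
        = (-1) ^ k * (prodUpTo x k * prodUpTo x k) := by
      calc prodUpTo x (k + 1) * prodUpTo x (k + 1)
          = prodUpTo x k * (x k * prodUpTo x k) * x k := by simp [prodUpTo, mul_assoc]
        _ = (prodUpTo x k * (-1) ^ k) * prodUpTo x k * (x k * x k) := by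
            rw [h1]; simp [mul_assoc]
        _ = _ := by
            rw [hs k (by omega), ((Commute.neg_one_right (prodUpTo x k)).pow_right k).eq]
            simp [mul_assoc]
    rw [h2]
    rcases neg_one_pow_eq_or A k with hh | hh <;> rcases ih with ih | ih <;> simp [hh, ih]

theorem map_prodUpTo {R A B : Type*} [CommRing R] [Ring A] [Ring B] [Algebra R A] [Algebra R B]
    (f : A →ₐ[R] B) (x : ℕ → A) (k : ℕ) :
    f (prodUpTo x k) = prodUpTo (fun i => f (x i)) k := by
  induction k with
  | zero => simp [prodUpTo]
  | succ k ih => simp [prodUpTo, ih]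

/-- Splitting of a Clifford algebra in the presence of a suitable volume element. -/
theorem clifford_split {V : Type*} [AddCommGroup V] [Module ℂ V] (Q : QuadraticForm ℂ V)
    (w : CliffordAlgebra Q) (h1 : w * w = 1)
    (h2 : ∀ v, ι Q v * w = -(w * ι Q v))
    (h3 : ∀ y : CliffordAlgebra (Q.prod (QuadraticMap.sq (R := ℂ))),
      (∀ v, y * ι _ (v, 0) = -(ι _ (v, 0) * y)) →
      y * CliffordAlgebra.map (QuadraticMap.Isometry.inl Q (QuadraticMap.sq (R := ℂ))) w
       = CliffordAlgebra.map (QuadraticMap.Isometry.inl Q (QuadraticMap.sq (R := ℂ))) w * y) :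
    Nonempty (CliffordAlgebra (Q.prod (QuadraticMap.sq (R := ℂ))) ≃ₐ[ℂ]
      (CliffordAlgebra Q × CliffordAlgebra Q)) := by
  set Q' := Q.prod (QuadraticMap.sq (R := ℂ)) with hQ'
  set i := CliffordAlgebra.map (QuadraticMap.Isometry.inl Q (QuadraticMap.sq (R := ℂ))) with hi
  have hiι : ∀ v, i (ι Q v) = ι Q' (v, 0) := fun v => by
    rw [hi, CliffordAlgebra.map_apply_ι]; rfl
  set y : CliffordAlgebra Q' := ι Q' (0, 1) with hy
  have hyy : y * y = 1 := by
    rw [hy, CliffordAlgebra.ι_sq_scalar]; simp [hQ']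
  have hyv : ∀ v, y * ι Q' (v, 0) = -(ι Q' (v, 0) * y) := by
    intro v
    rw [hy, eq_neg_iff_add_eq_zero]
    rw [CliffordAlgebra.ι_mul_ι_add_swap]
    simp [hQ', QuadraticMap.polar]
  have hyw := h3 y hyv
  obtain ⟨z, hz⟩ : ∃ z : CliffordAlgebra Q', z = y * i w := ⟨_, rfl⟩
  have hiw : i w * i w = 1 := by rw [← map_mul, h1, map_one]
  have hzz : z * z = 1 := by
    calc z * z = y * (i w * y) * i w := by simp [hz, mul_assoc]
      _ = (y * y) * (i w * i w) := by rw [← hyw]; simp [mul_assoc]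
      _ = 1 := by rw [hyy, hiw, one_mul]
  have hzv : ∀ v, z * ι Q' (v, 0) = ι Q' (v, 0) * z := by
    intro v
    have := congrArg i (h2 v)
    rw [map_neg, map_mul, map_mul, hiι] at this
    have h4 : i w * ι Q' (v, 0) = -(ι Q' (v, 0) * i w) := by rw [this, neg_neg]
    rw [hz, mul_assoc, h4, mul_neg, ← mul_assoc, hyv, neg_mul, neg_neg, mul_assoc]
  have hzi : ∀ a, z * i a = i a * z := by
    intro a
    induction a using CliffordAlgebra.induction with
    | algebraMap r => rw [AlgHom.commutes]; exact (Algebra.commutes r z).symm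
    | ι v => rw [hiι]; exact hzv v
    | mul a b ha hb => rw [map_mul, ← mul_assoc, ha, mul_assoc, hb, mul_assoc]
    | add a b ha hb => rw [map_add, mul_add, ha, hb, add_mul]
  -- forward map
  let fl : V × ℂ →ₗ[ℂ] CliffordAlgebra Q × CliffordAlgebra Q :=
    LinearMap.prod
      ((ι Q).coprod (LinearMap.toSpanSingleton ℂ _ w))
      ((ι Q).coprod (LinearMap.toSpanSingleton ℂ _ (-w)))
  have fl_apply : ∀ v r, fl (v, r) = (ι Q v + r • w, ι Q v - r • w) := by
    intro v r; simp [fl, sub_eq_add_neg]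
  have key : ∀ v (r : ℂ), (ι Q v + r • w) * (ι Q v + r • w)
      = algebraMap ℂ _ (Q v + r * r) := by
    intro v r
    rw [add_mul, mul_add, mul_add, CliffordAlgebra.ι_sq_scalar, mul_smul_comm, smul_mul_assoc,
      smul_mul_smul_comm, h1, h2, map_add, Algebra.algebraMap_eq_smul_one (r * r)]
    module
  have hfl : ∀ m, fl m * fl m = algebraMap ℂ _ (Q' m) := by
    rintro ⟨v, r⟩
    rw [fl_apply]
    have k2 := key v (-r)
    rw [neg_smul, ← sub_eq_add_neg, neg_mul_neg] at k2
    ext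
    · simpa [hQ'] using key v r
    · simpa [hQ'] using k2
  let F : CliffordAlgebra Q' →ₐ[ℂ] CliffordAlgebra Q × CliffordAlgebra Q :=
    CliffordAlgebra.lift Q' ⟨fl, hfl⟩
  have Fι : ∀ v r, F (ι Q' (v, r)) = (ι Q v + r • w, ι Q v - r • w) := by
    intro v r
    rw [← fl_apply]; exact CliffordAlgebra.lift_ι_apply _ _ _
  have Fi : ∀ a, F (i a) = (a, a) := by
    intro a
    have : F.comp i = AlgHom.prod (AlgHom.id ℂ _) (AlgHom.id ℂ _) := by
      apply CliffordAlgebra.hom_ext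
      ext v <;> simp [hiι, Fι]
    simpa using DFunLike.congr_fun this a
  have Fy : F y = (w, -w) := by rw [hy, Fι]; simp
  have Fz : F z = (1, -1) := by rw [hz, map_mul, Fy, Fi]; simp [h1]
  -- backward map
  let g : CliffordAlgebra Q × CliffordAlgebra Q → CliffordAlgebra Q' := fun p =>
    (1 / 2 : ℂ) • (i p.1 * (1 + z) + i p.2 * (1 - z))
  have Fg : ∀ p, F (g p) = p := by
    rintro ⟨a, b⟩
    simp only [g, map_smul, map_add, map_mul, map_sub, Fi, Fz, map_one]
    ext
    · simp [mul_add, ← two_smul ℂ a, smul_smul]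
      try module
    · simp [mul_add, mul_sub]
      try module
  have g_mul : ∀ p p', g (p * p') = g p * g p' := by
    rintro ⟨a, b⟩ ⟨a', b'⟩
    have e1 : ∀ s t : CliffordAlgebra Q, (i s * (1 + z)) * (i t * (1 + z))
        = (2 : ℂ) • (i (s * t) * (1 + z)) := by
      intro s t
      have : (1 + z) * (i t * (1 + z)) = (2 : ℂ) • (i t * (1 + z)) := by
        simp only [add_mul, mul_add, mul_one, one_mul, ← mul_assoc, hzi]
        rw [mul_assoc _ z z, hzz, mul_one]; module
      rw [mul_assoc, this, mul_smul_comm, map_mul, mul_assoc]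
    have e2 : ∀ s t : CliffordAlgebra Q, (i s * (1 - z)) * (i t * (1 - z))
        = (2 : ℂ) • (i (s * t) * (1 - z)) := by
      intro s t
      have : (1 - z) * (i t * (1 - z)) = (2 : ℂ) • (i t * (1 - z)) := by
        simp only [sub_mul, mul_sub, mul_one, one_mul, ← mul_assoc, hzi]
        rw [mul_assoc _ z z, hzz, mul_one]; module
      rw [mul_assoc, this, mul_smul_comm, map_mul, mul_assoc]
    have e3 : ∀ s t : CliffordAlgebra Q, (i s * (1 + z)) * (i t * (1 - z)) = 0 := by
      intro s t
      have : (1 + z) * (i t * (1 - z)) = 0 := by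
        simp only [add_mul, mul_sub, mul_one, one_mul, ← mul_assoc, hzi]
        rw [mul_assoc _ z z, hzz, mul_one]; module
      rw [mul_assoc, this, mul_zero]
    have e4 : ∀ s t : CliffordAlgebra Q, (i s * (1 - z)) * (i t * (1 + z)) = 0 := by
      intro s t
      have : (1 - z) * (i t * (1 + z)) = 0 := by
        simp only [sub_mul, mul_add, mul_one, one_mul, ← mul_assoc, hzi]
        rw [mul_assoc _ z z, hzz, mul_one]; module
      rw [mul_assoc, this, mul_zero]
    simp only [g, Prod.mk_mul_mk]
    rw [smul_mul_smul_comm, add_mul (i a * (1 + z)), mul_add (i a * (1 + z)),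
      mul_add (i b * (1 - z)), e1, e2, e3, e4]
    module
  have g_diag : ∀ a, g (a, a) = i a := by
    intro a
    simp only [g, mul_add, mul_sub, mul_one]
    module
  let G : CliffordAlgebra Q × CliffordAlgebra Q →ₐ[ℂ] CliffordAlgebra Q' :=
    { toFun := g
      map_one' := by rw [Prod.one_eq_mk, g_diag, map_one]
      map_mul' := g_mul
      map_zero' := by rw [Prod.zero_eq_mk, g_diag, map_zero]
      map_add' := by
        rintro ⟨a, b⟩ ⟨a', b'⟩
        simp only [g, Prod.mk_add_mk, map_add, add_mul]
        module
      commutes' := by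
        intro r
        have : (algebraMap ℂ (CliffordAlgebra Q × CliffordAlgebra Q)) r
          = (algebraMap ℂ _ r, algebraMap ℂ _ r) := rfl
        rw [this, g_diag, AlgHom.commutes] }
  refine ⟨AlgEquiv.ofAlgHom F G (AlgHom.ext fun p => Fg p) ?_⟩
  apply CliffordAlgebra.hom_ext
  apply LinearMap.ext
  rintro ⟨v, r⟩
  change g (F (ι Q' (v, r))) = ι Q' (v, r)
  have hwz : i w * z = y := by rw [hz, ← mul_assoc, ← hyw, mul_assoc, hiw, mul_one]
  have hsplit : ι Q' (v, r) = ι Q' (v, 0) + r • y := by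
    rw [hy, ← map_smul, ← map_add]; simp
  rw [Fι, hsplit, ← hwz, ← hiι]
  simp only [g, map_add, map_sub, map_smul, mul_add, add_mul, mul_sub, sub_mul, mul_one,
    smul_mul_assoc]
  module

/-- The sum of squares form on `ℂ^n`. -/
noncomputable abbrev sumSq (n : ℕ) : QuadraticForm ℂ (Fin n → ℂ) :=
  QuadraticMap.weightedSumSquares ℂ (1 : Fin n → ℂ)

theorem complexify_equiv (p q : ℕ) :
    Nonempty ((ℂ ⊗[ℝ] Cl p q) ≃ₐ[ℂ] CliffordAlgebra (sumSq (p + q))) := by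
  classical
  let w : Fin (p + q) → ℝ := fun i => if (i : ℕ) < p then (1 : ℝ) else -1
  have hw : ∀ i, (w i : ℂ) ≠ 0 := by
    intro i; simp only [w]; split_ifs <;> simp
  let L := TensorProduct.piScalarRight ℝ ℂ ℂ (Fin (p + q))
  have hL : (QuadraticMap.weightedSumSquares ℂ (fun i => (w i : ℂ))).comp L.toLinearMap
      = (Qpq p q).baseChange ℂ := by
    apply baseChange_ext
    intro m
    simp [L, Qpq, QuadraticMap.weightedSumSquares_apply, w]
    refine Finset.sum_congr rfl fun k _ => ?_
    split_ifs <;> simp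
  let I1 : ((Qpq p q).baseChange ℂ).IsometryEquiv
      (QuadraticMap.weightedSumSquares ℂ (fun i => (w i : ℂ))) :=
    { L with map_app' := fun m => by rw [← hL]; rfl }
  let I2 := QuadraticForm.isometryEquivSumSquaresUnits (fun i => Units.mk0 (w i : ℂ) (hw i))
  exact ⟨(CliffordAlgebra.equivBaseChange ℂ (Qpq p q)).symm.trans
    ((CliffordAlgebra.equivOfIsometry I1).trans (CliffordAlgebra.equivOfIsometry I2))⟩

theorem sumSq_succ (m : ℕ) :
    Nonempty ((sumSq (m + 1)).IsometryEquiv ((sumSq m).prod (QuadraticMap.sq (R := ℂ)))) := by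
  let L : ((Fin m → ℂ) × ℂ) ≃ₗ[ℂ] (Fin (m + 1) → ℂ) :=
    (LinearEquiv.prodComm ℂ _ _).trans (Fin.consLinearEquiv ℂ (fun _ : Fin (m + 1) => ℂ))
  let I : ((sumSq m).prod (QuadraticMap.sq (R := ℂ))).IsometryEquiv (sumSq (m + 1)) :=
    { L with
      map_app' := by
        rintro ⟨v, r⟩
        change sumSq (m + 1) (Fin.cons r v) = _
        simp [QuadraticMap.weightedSumSquares_apply, Fin.sum_univ_succ, add_comm] }
  exact ⟨I.symm⟩

theorem sumSq_split (m : ℕ) (hm : Even m) :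
    Nonempty (CliffordAlgebra (sumSq (m + 1)) ≃ₐ[ℂ]
      (CliffordAlgebra (sumSq m) × CliffordAlgebra (sumSq m))) := by
  obtain ⟨I⟩ := sumSq_succ m
  let b : ℕ → (Fin m → ℂ) := fun k => if h : k < m then Pi.single ⟨k, h⟩ 1 else 0
  let x : ℕ → CliffordAlgebra (sumSq m) := fun k => ι (sumSq m) (b k)
  have hanti : ∀ i < m, ∀ j < m, i ≠ j → x i * x j = -(x j * x i) := by
    intro i hi j hj hij
    rw [eq_neg_iff_add_eq_zero]
    simp only [x]
    rw [CliffordAlgebra.ι_mul_ι_add_swap]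
    have hne : (⟨i, hi⟩ : Fin m) ≠ ⟨j, hj⟩ := by simpa using hij
    have : QuadraticMap.polar (sumSq m) (b i) (b j) = 0 := by
      simp only [QuadraticMap.polar, QuadraticMap.weightedSumSquares_apply, b, hi, hj, dif_pos]
      rw [← Finset.sum_sub_distrib, ← Finset.sum_sub_distrib]
      apply Finset.sum_eq_zero
      intro k _
      by_cases h1 : k = ⟨i, hi⟩
      · subst h1; simp [hij]
      · by_cases h2 : k = ⟨j, hj⟩ <;> simp [Pi.single_apply, h1, h2, hij.symm]
    rw [this, map_zero]
  have hsq : ∀ i < m, x i * x i = 1 := by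
    intro i hi
    simp only [x]
    rw [CliffordAlgebra.ι_sq_scalar]
    have : sumSq m (b i) = 1 := by
      simp [QuadraticMap.weightedSumSquares_apply, b, hi, Pi.single_apply]
    rw [this, map_one]
  have hv : ∀ v : Fin m → ℂ, ι (sumSq m) v = ∑ k : Fin m, v k • x k := by
    intro v
    simp only [x, ← map_smul, ← map_sum]
    congr 1
    ext j
    simp [b, Finset.sum_apply, Pi.single_apply]
  set P := prodUpTo x m with hP
  have hPv : ∀ v, ι (sumSq m) v * P = -(P * ι (sumSq m) v) := by
    intro v
    rw [hv, Finset.sum_mul, Finset.mul_sum, ← Finset.sum_neg_distrib]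
    refine Finset.sum_congr rfl fun k _ => ?_
    rw [smul_mul_assoc, mul_smul_comm, prodUpTo_mem x m hanti k k.2, pow_succ, hm.neg_one_pow]
    simp [hP]
  have hc : ∃ c : ℂ, (c • P) * (c • P) = 1 := by
    rcases prodUpTo_sq x m hanti hsq with h | h
    · exact ⟨1, by rw [one_smul]; exact h⟩
    · refine ⟨Complex.I, ?_⟩
      rw [smul_mul_smul_comm, h, Complex.I_mul_I]; simp
  obtain ⟨c, hc⟩ := hc
  obtain ⟨E⟩ := clifford_split (sumSq m) (c • P) hc
    (fun v => by rw [mul_smul_comm, hPv, smul_mul_assoc, smul_neg])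
    (fun y hy => by
      rw [map_smul, mul_smul_comm, smul_mul_assoc, hP, map_prodUpTo, prodUpTo_anti,
        hm.neg_one_pow, one_mul]
      intro i _
      simp only [x, CliffordAlgebra.map_apply_ι]
      exact hy (b i))
  exact ⟨(CliffordAlgebra.equivOfIsometry I).trans E⟩

/-- For `n = p + q` odd, the complexified Clifford algebra `ℂ_n = ℂ ⊗_ℝ Cl_{p,q}`
decomposes into a direct sum of two subalgebras: for all `p', q'` with `p' + q' = n − 1`
there is a `ℂ`-algebra isomorphism
`ℂ ⊗_ℝ Cl_{p,q} ≅ (ℂ ⊗_ℝ Cl_{p',q'}) × (ℂ ⊗_ℝ Cl_{p',q'})`. -/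
theorem complexified_cl_odd_decomposition (p q : ℕ) (hodd : Odd (p + q))
    (p' q' : ℕ) (h' : p' + q' = p + q - 1) :
    Nonempty ((ℂ ⊗[ℝ] Cl p q) ≃ₐ[ℂ] ((ℂ ⊗[ℝ] Cl p' q') × (ℂ ⊗[ℝ] Cl p' q'))) := by
  obtain ⟨m, hm⟩ := hodd
  have h1 : p + q = p' + q' + 1 := by omega
  obtain ⟨E⟩ := complexify_equiv p q
  obtain ⟨E'⟩ := complexify_equiv p' q'
  obtain ⟨S⟩ : Nonempty (CliffordAlgebra (sumSq (p + q)) ≃ₐ[ℂ]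
      (CliffordAlgebra (sumSq (p' + q')) × CliffordAlgebra (sumSq (p' + q')))) := by
    rw [h1]
    exact sumSq_split (p' + q') ⟨m, by omega⟩
  exact ⟨(E.trans S).trans (AlgEquiv.prodCongr E'.symm E'.symm)⟩
end

section
/- For all p, q ≥ 0 there are isomorphisms of ℝ-algebras: Cl_{p,q+2} ≅ Cl_{0,2} ⊗ Cl_{q,p}, Cl_{p+2,q} ≅ Cl_{2,0} ⊗ Cl_{q,p}, and Cl_{p+1,q+1} ≅ Cl_{1,1} ⊗ Cl_{p,q}, where ⊗ denotes the ordinary tensor product of ℝ-algebras. -/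
open CliffordAlgebra
open scoped TensorProduct

section aux

variable {V W : Type} [AddCommGroup V] [Module ℝ V] [AddCommGroup W] [Module ℝ W]

/-- `ω = ab` anticommutes with everything in the span of the orthogonal vectors `a`, `b`. -/
lemma omega_anti (Q : QuadraticForm ℝ V) (a b : V) (hab : Q.IsOrtho a b)
    (hspan : ∀ v : V, ∃ x y : ℝ, v = x • a + y • b) (v : V) :
    ι Q v * (ι Q a * ι Q b) = -((ι Q a * ι Q b) * ι Q v) := by
  obtain ⟨x, y, rfl⟩ := hspan v
  have h : ι Q a * ι Q b = -(ι Q b * ι Q a) := ι_mul_ι_comm_of_isOrtho hab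
  have h' : ι Q b * ι Q a = -(ι Q a * ι Q b) := by rw [h, neg_neg]
  have e1 : ι Q a * (ι Q a * ι Q b) = -((ι Q a * ι Q b) * ι Q a) := by
    rw [mul_assoc, h', mul_neg, neg_neg]
  have e2 : ι Q b * (ι Q a * ι Q b) = -((ι Q a * ι Q b) * ι Q b) := by
    rw [← mul_assoc, h', neg_mul]
  simp only [map_add, map_smul, add_mul, mul_add, smul_mul_assoc, mul_smul_comm, e1, e2, neg_add,
    smul_neg]

lemma omega_sq (Q : QuadraticForm ℝ V) (a b : V) (hab : Q.IsOrtho a b) :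
    (ι Q a * ι Q b) * (ι Q a * ι Q b) = algebraMap ℝ _ (-(Q a * Q b)) := by
  have h : ι Q b * ι Q a = -(ι Q a * ι Q b) := by
    rw [ι_mul_ι_comm_of_isOrtho hab, neg_neg]
  calc (ι Q a * ι Q b) * (ι Q a * ι Q b) = ι Q a * (ι Q b * ι Q a) * ι Q b := by
        simp only [mul_assoc]
    _ = -((ι Q a * ι Q a) * (ι Q b * ι Q b)) := by
        rw [h]; simp only [mul_assoc, mul_neg, neg_mul]
    _ = _ := by rw [ι_sq_scalar, ι_sq_scalar, map_neg, map_mul]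

/-- The forward map. -/
noncomputable def fwd (Q : QuadraticForm ℝ V) (P : QuadraticForm ℝ W) (c : ℝ)
    (ω : CliffordAlgebra Q) (hsq : ω * ω = algebraMap ℝ _ c)
    (hanti : ∀ v, ι Q v * ω = -(ω * ι Q v)) :
    CliffordAlgebra (Q.prod (c • P)) →ₐ[ℝ] CliffordAlgebra Q ⊗[ℝ] CliffordAlgebra P :=
  lift (Q.prod (c • P)) ⟨LinearMap.coprod
      ((Algebra.TensorProduct.includeLeft (R := ℝ) (S := ℝ) (A := CliffordAlgebra Q)
        (B := CliffordAlgebra P)).toLinearMap ∘ₗ ι Q)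
      (TensorProduct.mk ℝ (CliffordAlgebra Q) (CliffordAlgebra P) ω ∘ₗ ι P), by
    rintro ⟨v, w⟩
    simp only [LinearMap.coprod_apply, LinearMap.comp_apply, AlgHom.toLinearMap_apply,
      Algebra.TensorProduct.includeLeft_apply, TensorProduct.mk_apply, add_mul, mul_add,
      Algebra.TensorProduct.tmul_mul_tmul, one_mul, mul_one, ι_sq_scalar, hsq, hanti,
      QuadraticMap.prod_apply, smul_apply, map_add, TensorProduct.neg_tmul,
      Algebra.TensorProduct.algebraMap_apply, smul_eq_mul, map_mul]
    simp only [Algebra.algebraMap_eq_smul_one, TensorProduct.tmul_smul, TensorProduct.smul_tmul',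
      smul_mul_assoc, one_mul, smul_smul, mul_comm (P w)]
    abel⟩

lemma fwd_ι (Q : QuadraticForm ℝ V) (P : QuadraticForm ℝ W) (c : ℝ)
    (ω : CliffordAlgebra Q) (hsq : ω * ω = algebraMap ℝ _ c)
    (hanti : ∀ v, ι Q v * ω = -(ω * ι Q v)) (v : V) (w : W) :
    fwd Q P c ω hsq hanti (ι _ (v, w)) = ι Q v ⊗ₜ 1 + ω ⊗ₜ ι P w :=
  lift_ι_apply _ _ _

/-- The backward map. -/
noncomputable def bwd (Q : QuadraticForm ℝ V) (P : QuadraticForm ℝ W) (c : ℝ) (hc : c ≠ 0)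
    (ω : CliffordAlgebra Q) (hsq : ω * ω = algebraMap ℝ _ c)
    (hanti : ∀ v, ι Q v * ω = -(ω * ι Q v))
    (hcomm : ∀ w, map (QuadraticMap.Isometry.inl Q (c • P)) ω * ι (Q.prod (c • P)) (0, w) =
      ι (Q.prod (c • P)) (0, w) * map (QuadraticMap.Isometry.inl Q (c • P)) ω) :
    CliffordAlgebra Q ⊗[ℝ] CliffordAlgebra P →ₐ[ℝ] CliffordAlgebra (Q.prod (c • P)) :=
  Algebra.TensorProduct.lift (map (QuadraticMap.Isometry.inl Q (c • P)))
    (lift P ⟨c⁻¹ • (LinearMap.mulLeft ℝ (map (QuadraticMap.Isometry.inl Q (c • P)) ω) ∘ₗ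
        ι (Q.prod (c • P)) ∘ₗ LinearMap.inr ℝ V W), by
      intro w
      have h1 : map (QuadraticMap.Isometry.inl Q (c • P)) ω *
          map (QuadraticMap.Isometry.inl Q (c • P)) ω = algebraMap ℝ _ c := by
        rw [← map_mul, hsq, AlgHom.commutes]
      simp only [LinearMap.smul_apply, LinearMap.comp_apply, LinearMap.mulLeft_apply,
        LinearMap.inr_apply, smul_mul_assoc, mul_smul_comm]
      rw [mul_assoc, ← mul_assoc _ _ (ι (Q.prod (c • P)) (0, w)), ← hcomm w, mul_assoc, ι_sq_scalar,
        ← mul_assoc, h1, ← map_mul, Algebra.smul_def, Algebra.smul_def, ← map_mul, ← map_mul]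
      congr 1
      simp only [QuadraticMap.prod_apply, smul_apply, map_zero, zero_add, smul_eq_mul]
      field_simp⟩)
    (by
      intro x y
      induction x using CliffordAlgebra.induction with
      | algebraMap r => rw [AlgHom.commutes]; exact Algebra.commutes _ _
      | add a b ha hb => rw [map_add]; exact ha.add_left hb
      | mul a b ha hb => rw [map_mul]; exact ha.mul_left hb
      | ι v =>
        induction y using CliffordAlgebra.induction with
        | algebraMap r => rw [AlgHom.commutes]; exact (Algebra.commutes _ _).symm
        | add a b ha hb => rw [map_add]; exact ha.add_right hb
        | mul a b ha hb => rw [map_mul]; exact ha.mul_right hb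
        | ι w =>
          rw [lift_ι_apply]
          refine Commute.smul_right (M := ℝ) ?_ c⁻¹
          simp only [LinearMap.comp_apply, LinearMap.mulLeft_apply, LinearMap.inr_apply]
          have h2 := congrArg (map (QuadraticMap.Isometry.inl Q (c • P))) (hanti v)
          rw [map_neg, map_mul, map_mul] at h2
          have h3 : map (QuadraticMap.Isometry.inl Q (c • P)) (ι Q v) * ι (Q.prod (c • P)) (0, w) =
              -(ι (Q.prod (c • P)) (0, w) * map (QuadraticMap.Isometry.inl Q (c • P)) (ι Q v)) := by
            rw [map_apply_ι]
            exact ι_mul_ι_comm_of_isOrtho (QuadraticMap.IsOrtho.inl_inr v w)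
          rw [Commute, SemiconjBy, ← mul_assoc, h2, neg_mul, mul_assoc, h3, mul_neg, neg_neg,
            mul_assoc])

lemma main_equiv (Q : QuadraticForm ℝ V) (P : QuadraticForm ℝ W) (a b : V) (hab : Q.IsOrtho a b)
    (hspan : ∀ v : V, ∃ x y : ℝ, v = x • a + y • b) (c : ℝ) (hc : c ≠ 0)
    (hcab : c = -(Q a * Q b)) :
    Nonempty (CliffordAlgebra (Q.prod (c • P)) ≃ₐ[ℝ] CliffordAlgebra Q ⊗[ℝ] CliffordAlgebra P) := by
  subst hcab
  set c := -(Q a * Q b) with hcdef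
  have hsq := omega_sq Q a b hab
  have hanti := omega_anti Q a b hab hspan
  have hcomm : ∀ w, map (QuadraticMap.Isometry.inl Q (c • P)) (ι Q a * ι Q b) *
      ι (Q.prod (c • P)) (0, w) =
      ι (Q.prod (c • P)) (0, w) * map (QuadraticMap.Isometry.inl Q (c • P)) (ι Q a * ι Q b) := by
    intro w
    have h : ∀ v, map (QuadraticMap.Isometry.inl Q (c • P)) (ι Q v) * ι (Q.prod (c • P)) (0, w) =
        -(ι (Q.prod (c • P)) (0, w) * map (QuadraticMap.Isometry.inl Q (c • P)) (ι Q v)) := by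
      intro v
      rw [map_apply_ι]
      exact ι_mul_ι_comm_of_isOrtho (QuadraticMap.IsOrtho.inl_inr v w)
    rw [map_mul, mul_assoc, h, mul_neg, ← mul_assoc, h, neg_mul, neg_neg, mul_assoc]
  have hinl : ∀ x, fwd Q P c _ hsq hanti (map (QuadraticMap.Isometry.inl Q (c • P)) x) =
      x ⊗ₜ 1 := by
    intro x
    have : (fwd Q P c _ hsq hanti).comp (map (QuadraticMap.Isometry.inl Q (c • P))) =
        Algebra.TensorProduct.includeLeft := by
      apply CliffordAlgebra.hom_ext
      ext v
      simp [fwd_ι]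
    exact DFunLike.congr_fun this x
  refine ⟨AlgEquiv.ofAlgHom (fwd Q P c _ hsq hanti) (bwd Q P c hc _ hsq hanti hcomm) ?_ ?_⟩
  · apply Algebra.TensorProduct.ext
    · apply CliffordAlgebra.hom_ext
      ext v
      simp [bwd, fwd_ι]
    · ext w
      have := hinl (ι Q a * ι Q b)
      simp only [AlgHom.comp_toLinearMap, LinearMap.comp_apply, AlgHom.toLinearMap_apply,
        AlgHom.comp_apply, AlgHom.restrictScalars_apply, bwd,
        Algebra.TensorProduct.includeRight_apply, Algebra.TensorProduct.lift_tmul, map_one, one_mul,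
        lift_ι_apply, LinearMap.smul_apply, LinearMap.mulLeft_apply, LinearMap.inr_apply, map_smul]
      rw [map_mul, this]
      simp only [fwd, lift_ι_apply, LinearMap.coprod_apply, map_zero, zero_add,
        LinearMap.comp_apply, TensorProduct.mk_apply, Algebra.TensorProduct.tmul_mul_tmul, one_mul,
        hsq, AlgHom.coe_id, id]
      rw [Algebra.algebraMap_eq_smul_one, ← TensorProduct.smul_tmul', smul_smul, inv_mul_cancel₀ hc,
        one_smul]
  · apply CliffordAlgebra.hom_ext
    apply LinearMap.prod_ext
    · ext v
      simp [bwd, fwd_ι]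
    · ext w
      simp only [AlgHom.comp_toLinearMap, LinearMap.comp_apply, AlgHom.toLinearMap_apply,
        LinearMap.inr_apply, fwd, lift_ι_apply, LinearMap.coprod_apply, map_zero, zero_add,
        TensorProduct.mk_apply, bwd, Algebra.TensorProduct.lift_tmul, LinearMap.smul_apply,
        LinearMap.mulLeft_apply, AlgHom.coe_id, id]
      rw [mul_smul_comm, ← mul_assoc, ← map_mul (map _) (ι Q a * ι Q b), hsq, AlgHom.commutes,
        ← Algebra.smul_def, smul_smul, inv_mul_cancel₀ hc, one_smul]

end aux

/-- Splitting a diagonal form. -/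
lemma split_equiv {A B C : Type} [Fintype A] [Fintype B] [Fintype C]
    (wA : A → ℝ) (wB : B → ℝ) (wC : C → ℝ) (c : ℝ) (σ : A ⊕ B ≃ C)
    (hA : ∀ a, wC (σ (.inl a)) = wA a) (hB : ∀ b, wC (σ (.inr b)) = c * wB b) :
    Nonempty (CliffordAlgebra (QuadraticMap.weightedSumSquares ℝ wC) ≃ₐ[ℝ]
      CliffordAlgebra ((QuadraticMap.weightedSumSquares ℝ wA).prod
        (c • QuadraticMap.weightedSumSquares ℝ wB))) := by
  refine ⟨CliffordAlgebra.equivOfIsometry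
    { (LinearEquiv.funCongrLeft ℝ ℝ σ).trans (LinearEquiv.sumArrowLequivProdArrow A B ℝ ℝ) with
      map_app' := ?_ }⟩
  intro x
  simp [QuadraticMap.weightedSumSquares_apply, QuadraticMap.prod_apply, ← σ.sum_comp, hA, hB,
    Finset.mul_sum, mul_assoc]

/-- The sign of the index `i`. -/
lemma wt_sum (p q : ℕ) (s : Fin p ⊕ Fin q) :
    (if ((finSumFinEquiv s : Fin (p+q)) : ℕ) < p then (1 : ℝ) else -1)
      = Sum.elim (fun _ => 1) (fun _ => -1) s := by
  rcases s with s | s <;> simp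

lemma combine (p q r s t u : ℕ) (hrs : r + s = 2) (c : ℝ)
    (τ : (Fin r ⊕ Fin s) ⊕ (Fin t ⊕ Fin u) ≃ Fin p ⊕ Fin q)
    (h1 : ∀ x, Sum.elim (fun _ => (1 : ℝ)) (fun _ => -1) (τ (.inl x)) =
      Sum.elim (fun _ => (1 : ℝ)) (fun _ => -1) x)
    (h2 : ∀ x, Sum.elim (fun _ => (1 : ℝ)) (fun _ => -1) (τ (.inr x)) =
      c * Sum.elim (fun _ => (1 : ℝ)) (fun _ => -1) x)
    (a b : Fin (r+s)) (hab : a ≠ b)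
    (hc : c = -((if (a : ℕ) < r then (1 : ℝ) else -1) * (if (b : ℕ) < r then (1 : ℝ) else -1))) :
    Nonempty (Cl p q ≃ₐ[ℝ] (Cl r s ⊗[ℝ] Cl t u)) := by
  obtain ⟨f⟩ := split_equiv (fun i : Fin (r+s) => if (i : ℕ) < r then (1 : ℝ) else -1)
    (fun i : Fin (t+u) => if (i : ℕ) < t then (1 : ℝ) else -1)
    (fun i : Fin (p+q) => if (i : ℕ) < p then (1 : ℝ) else -1) c
    (((Equiv.sumCongr finSumFinEquiv finSumFinEquiv).symm.trans τ).trans finSumFinEquiv)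
    (by
      intro x
      obtain ⟨x, rfl⟩ := finSumFinEquiv.surjective x
      simp only [Equiv.trans_apply, wt_sum, ← h1]
      simp [wt_sum])
    (by
      intro x
      obtain ⟨x, rfl⟩ := finSumFinEquiv.surjective x
      simp only [Equiv.trans_apply, wt_sum, ← h2]
      simp [wt_sum])
  have hQ : ∀ i, Qpq r s (Pi.single i 1) = if (i : ℕ) < r then (1 : ℝ) else -1 := by
    intro i
    simp [Qpq, QuadraticMap.weightedSumSquares_apply, Pi.single_apply]
  obtain ⟨g⟩ := main_equiv (Qpq r s) (Qpq t u) (Pi.single a 1) (Pi.single b 1)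
    (by
      rw [QuadraticMap.isOrtho_def]
      simp only [Qpq, QuadraticMap.weightedSumSquares_apply, ← Finset.sum_add_distrib]
      refine Finset.sum_congr rfl fun i _ => ?_
      by_cases hi : i = a
      · subst hi; simp [hab]
      · simp [Pi.single_apply, hi])
    (by
      intro v
      refine ⟨v a, v b, ?_⟩
      ext i
      have : i = a ∨ i = b := by omega
      rcases this with rfl | rfl
      · simp [hab]
      · simp [hab.symm])
    c (by rw [hc]; split_ifs <;> norm_num) (by rw [hQ, hQ, hc])
  exact ⟨f.trans g⟩

/-- The fundamental periodicity isomorphisms of real Clifford algebras: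
`Cl_{p,q+2} ≅ Cl_{0,2} ⊗ Cl_{q,p}`, `Cl_{p+2,q} ≅ Cl_{2,0} ⊗ Cl_{q,p}` and
`Cl_{p+1,q+1} ≅ Cl_{1,1} ⊗ Cl_{p,q}` (ordinary tensor products of `ℝ`-algebras). -/
theorem cl_quaternionic_decompositions (p q : ℕ) :
    Nonempty (Cl p (q+2) ≃ₐ[ℝ] (Cl 0 2 ⊗[ℝ] Cl q p)) ∧
    Nonempty (Cl (p+2) q ≃ₐ[ℝ] (Cl 2 0 ⊗[ℝ] Cl q p)) ∧
    Nonempty (Cl (p+1) (q+1) ≃ₐ[ℝ] (Cl 1 1 ⊗[ℝ] Cl p q)) := by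
  refine ⟨?_, ?_, ?_⟩
  · refine combine p (q+2) 0 2 q p rfl (-1)
      { toFun := Sum.elim (Sum.elim Fin.elim0 (fun i => .inr (finSumFinEquiv (.inr i))))
          (Sum.elim (fun i => .inr (finSumFinEquiv (.inl i))) (fun i => .inl i))
        invFun := Sum.elim (fun i => .inr (.inr i)) (fun i => Sum.elim (fun j => .inr (.inl j))
          (fun j => .inl (.inr j)) (finSumFinEquiv.symm i))
        left_inv := ?_
        right_inv := ?_ } ?_ ?_ (0 : Fin 2) (1 : Fin 2) (by decide) (by simp)
    · rintro ((x | x) | (x | x))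
      · exact x.elim0
      all_goals simp
    · rintro (x | x)
      · simp
      · obtain ⟨x | x, rfl⟩ := finSumFinEquiv.surjective x <;> simp
    · rintro (x | x)
      · exact x.elim0
      · simp
    · rintro (x | x) <;> simp
  · refine combine (p+2) q 2 0 q p rfl (-1)
      { toFun := Sum.elim (Sum.elim (fun i => .inl (finSumFinEquiv (.inr i))) Fin.elim0)
          (Sum.elim (fun i => .inr i) (fun i => .inl (finSumFinEquiv (.inl i))))
        invFun := Sum.elim (fun i => Sum.elim (fun j => .inr (.inr j))
          (fun j => .inl (.inl j)) (finSumFinEquiv.symm i)) (fun i => .inr (.inl i))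
        left_inv := ?_
        right_inv := ?_ } ?_ ?_ (0 : Fin 2) (1 : Fin 2) (by decide) (by simp)
    · rintro ((x | x) | (x | x))
      · simp
      · exact x.elim0
      all_goals simp
    · rintro (x | x)
      · obtain ⟨x | x, rfl⟩ := finSumFinEquiv.surjective x <;> simp
      · simp
    · rintro (x | x)
      · simp
      · exact x.elim0
    · rintro (x | x) <;> simp
  · refine combine (p+1) (q+1) 1 1 p q rfl 1
      { toFun := Sum.elim (Sum.elim (fun i => .inl (finSumFinEquiv (.inr i)))
            (fun i => .inr (finSumFinEquiv (.inr i))))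
          (Sum.elim (fun i => .inl (finSumFinEquiv (.inl i)))
            (fun i => .inr (finSumFinEquiv (.inl i))))
        invFun := Sum.elim
          (fun i => Sum.elim (fun j => .inr (.inl j))
            (fun j => .inl (.inl j)) (finSumFinEquiv.symm i))
          (fun i => Sum.elim (fun j => .inr (.inr j))
            (fun j => .inl (.inr j)) (finSumFinEquiv.symm i))
        left_inv := ?_
        right_inv := ?_ } ?_ ?_ (0 : Fin 2) (1 : Fin 2) (by decide) (by simp)
    · rintro ((x | x) | (x | x)) <;> simp only [Sum.elim_inl, Sum.elim_inr, Equiv.symm_apply_apply]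
    · rintro (x | x)
      · obtain ⟨x | x, rfl⟩ := finSumFinEquiv.surjective x <;>
          simp only [Sum.elim_inl, Sum.elim_inr, Equiv.symm_apply_apply]
      · obtain ⟨x | x, rfl⟩ := finSumFinEquiv.surjective x <;>
          simp only [Sum.elim_inl, Sum.elim_inr, Equiv.symm_apply_apply]
    · rintro (x | x) <;> simp
    · rintro (x | x) <;> simp
end

section
/- In the Majorana algebra Cl_{3,1} (with e₁² = e₂² = e₃² = 1 and e₄² = −1), set e₃₁ = (1/2)(1 + e₁)·(1/2)(1 + e₂e₄). Then e₃₁ is an idempotent, e₁·e₃₁ = e₃₁, and the left ideal Cl_{3,1} · e₃₁ coincides with Cl⁺_{3,1} · e₃₁, where Cl⁺_{3,1} is the even subalgebra. -/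
open CliffordAlgebra
open scoped TensorProduct

theorem e_sq_aux (i : Fin (3+1)) :
    e 3 1 i * e 3 1 i = algebraMap ℝ _ (if (i : ℕ) < 3 then (1 : ℝ) else -1) := by
  unfold e
  rw [CliffordAlgebra.ι_sq_scalar]
  congr 1
  simp [Qpq, QuadraticMap.weightedSumSquares_apply, Pi.single_apply]

theorem e_anti_aux (i j : Fin (3+1)) (h : i ≠ j) :
    e 3 1 i * e 3 1 j = -(e 3 1 j * e 3 1 i) := by
  unfold e
  refine eq_neg_of_add_eq_zero_left (CliffordAlgebra.ι_mul_ι_add_swap_of_isOrtho ?_)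
  rw [QuadraticMap.isOrtho_def]
  simp only [Qpq, QuadraticMap.weightedSumSquares_apply, ← Finset.sum_add_distrib]
  refine Finset.sum_congr rfl fun k _ => ?_
  by_cases hi : k = i
  · subst hi
    simp [Pi.single_apply, h]
  · simp [Pi.single_apply, hi]

theorem half_idem_aux {A : Type*} [Ring A] [Algebra ℝ A] (a : A) (h : a * a = 1) :
    IsIdempotentElem ((2 : ℝ)⁻¹ • (1 + a)) := by
  unfold IsIdempotentElem
  rw [smul_mul_smul_comm]
  have : (1 + a) * (1 + a) = (2 : ℝ) • (1 + a) := by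
    rw [two_smul, mul_add, add_mul, add_mul, h]
    simp only [one_mul, mul_one]
    abel
  rw [this, smul_smul]
  norm_num

/-- In the Majorana algebra `Cl_{3,1}` (with `e₁² = e₂² = e₃² = 1`, `e₄² = −1`;
generators `0`-indexed, so `e₁ = e 3 1 0`, `e₂e₄ = e 3 1 1 * e 3 1 3`), the element
`e₃₁ = ½(1 + e₁) · ½(1 + e₂e₄)` is an idempotent, `e₁ · e₃₁ = e₃₁`, and the left ideal
`Cl_{3,1} · e₃₁` coincides with `Cl⁺_{3,1} · e₃₁`, where `Cl⁺_{3,1}` is the even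
subalgebra. -/
theorem majorana_idempotent_even_reduction
    (e₃₁ : Cl 3 1)
    (he : e₃₁ = ((2 : ℝ)⁻¹ • (1 + e 3 1 0)) * ((2 : ℝ)⁻¹ • (1 + e 3 1 1 * e 3 1 3))) :
    IsIdempotentElem e₃₁ ∧
    e 3 1 0 * e₃₁ = e₃₁ ∧
    (Set.range fun x : Cl 3 1 => x * e₃₁) =
      ((fun y : Cl 3 1 => y * e₃₁) '' (CliffordAlgebra.even (Qpq 3 1) : Set (Cl 3 1))) := by
  have h0 : e 3 1 0 * e 3 1 0 = 1 := by simpa using e_sq_aux 0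
  have h1 : e 3 1 1 * e 3 1 1 = 1 := by simpa using e_sq_aux 1
  have h3 : e 3 1 3 * e 3 1 3 = -1 := by simpa using e_sq_aux 3
  have a01 := e_anti_aux 0 1 (by decide)
  have a03 := e_anti_aux 0 3 (by decide)
  have a31 := e_anti_aux 3 1 (by decide)
  have hb : (e 3 1 1 * e 3 1 3) * (e 3 1 1 * e 3 1 3) = 1 := by
    rw [mul_assoc, ← mul_assoc (e 3 1 3), a31, neg_mul, mul_neg, mul_assoc, h3,
      ← mul_assoc, h1]
    simp
  have hc : Commute (e 3 1 0) (e 3 1 1 * e 3 1 3) := by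
    unfold Commute SemiconjBy
    rw [← mul_assoc, a01, neg_mul, mul_assoc, a03, mul_neg, neg_neg, mul_assoc]
  have hC : Commute ((2 : ℝ)⁻¹ • (1 + e 3 1 0)) ((2 : ℝ)⁻¹ • (1 + e 3 1 1 * e 3 1 3)) :=
    ((((Commute.one_right _).add_right
      ((Commute.one_left _).add_left hc))).smul_left _).smul_right _
  have hE : e 3 1 0 * e₃₁ = e₃₁ := by
    rw [he, ← mul_assoc, mul_smul_comm _ (e 3 1 0), mul_add (e 3 1 0), h0, mul_one, add_comm (e 3 1 0)]
  refine ⟨?_, hE, ?_⟩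
  · rw [he]
    exact (half_idem_aux _ h0).mul_of_commute hC (half_idem_aux _ hb)
  · apply Set.Subset.antisymm
    · rintro _ ⟨x, rfl⟩
      have hx : x ∈ evenOdd (Qpq 3 1) 0 ⊔ evenOdd (Qpq 3 1) 1 := by
        rw [(evenOdd_isCompl (Q := Qpq 3 1)).sup_eq_top]
        trivial
      obtain ⟨a, ha, b, hb', rfl⟩ := Submodule.mem_sup.mp hx
      refine ⟨a + b * e 3 1 0, ?_, ?_⟩
      · change a + b * e 3 1 0 ∈ evenOdd (Qpq 3 1) 0
        refine add_mem ha ?_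
        exact evenOdd_mul_le (Qpq 3 1) 1 1
          (Submodule.mul_mem_mul hb' (ι_mem_evenOdd_one (Qpq 3 1) _))
      · simp only [add_mul, mul_assoc, hE]
    · rintro _ ⟨x, _, rfl⟩
      exact ⟨x, rfl⟩
end
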